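/- In the situation of the previous construction (m cubefree with m ≢ 0, ±1 (mod 9), not a perfect cube; b a nonzero integer; P = (r/s², y) a rational point on y² = x³ − mb³ with P ∉ 2E'(ℚ), gcd(r, s) = 1 and gcd(r, b) = 1; α = r − s²bω), assume additionally that s is even and r > 0. Then r ≡ 1 (mod 4), and every prime ideal of O_K (including those above 2) is unramified in the quadratic extension K(√α) of K. -/

import Mathlib

open NumberField

/-- The quadratic twist `E' : y² = x³ − mb³` over `ℚ` in Weierstrass form. -/
def Wmb (m b : ℤ) : WeierstrassCurve.Affine ℚ := ⟨0, 0, 0, 0, -((m : ℚ) * (b : ℚ) ^ 3)⟩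

/-!
Write `c = s² b`, so that `α = r - c ω` and clearing denominators gives
`α (r² + r c ω + c² ω²) = r³ - m c³ = t²` with `t` an integer.

If `α = β²` in `K`, comparing the coordinates of `β = u + v e + w e²`, `e = b ω`, shows that
`P` is the double of `±(v / w, 1 / w)`; hence `K(√α)` is a quadratic extension.

A prime `𝔭` containing at most one of the two factors divides `α` to an even power. If it contains
both, it contains `3 r²`; the condition on `m` modulo `9` excludes `3`, so `𝔭` lies over a prime
`p ∣ r` with `p² ∥ m`, and multiplying `α` by the square of `ω / p` makes it a unit at `𝔭`. In all
cases `α` is a unit at `𝔭` modulo squares, which settles the primes not above `2`.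

Finally `t² ≡ r³ (mod 8)` forces `r ≡ 1 (mod 8)`, so `α = 1 + 4κ` and `(1 + √α) / 2` is a root of
`X² - X - κ`, whose discriminant `α` is a unit at the primes above `2`.
-/

section RadicalExtension

open Polynomial

variable {F K : Type*} [Field F] [Field K] [Algebra F K] {a : F} {e : K}

theorem minpoly_eq_X_pow_sub_C_of_pow_prime_eq {p : ℕ} (hp : p.Prime) (ha : ∀ q : F, q ^ p ≠ a)
    (he : e ^ p = algebraMap F K a) : minpoly F e = X ^ p - C a :=
  (minpoly.eq_of_irreducible_of_monic (X_pow_sub_C_irreducible_of_prime hp ha) (by simp [he])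
    (monic_X_pow_sub_C a hp.ne_zero)).symm

theorem linearIndependent_pow_of_pow_prime_eq {p : ℕ} (hp : p.Prime) (ha : ∀ q : F, q ^ p ≠ a)
    (he : e ^ p = algebraMap F K a) : LinearIndependent F fun i : Fin p ↦ e ^ (i : ℕ) := by
  have h := linearIndependent_pow (K := F) e
  rwa [minpoly_eq_X_pow_sub_C_of_pow_prime_eq hp ha he, natDegree_X_pow_sub_C] at h

theorem finrank_eq_of_pow_prime_eq {p : ℕ} (hp : p.Prime) (ha : ∀ q : F, q ^ p ≠ a)
    (he : e ^ p = algebraMap F K a) (hgen : Algebra.adjoin F {e} = ⊤) :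
    Module.finrank F K = p := by
  have hint : IsIntegral F e := ⟨X ^ p - C a, monic_X_pow_sub_C a hp.ne_zero, by simp [he]⟩
  rw [(PowerBasis.ofAdjoinEqTop hint hgen).finrank, PowerBasis.ofAdjoinEqTop_dim,
    minpoly_eq_X_pow_sub_C_of_pow_prime_eq hp ha he, natDegree_X_pow_sub_C]

theorem eq_zero_of_add_mul_add_mul_sq_eq_zero (ha : ∀ q : F, q ^ 3 ≠ a)
    (he : e ^ 3 = algebraMap F K a) {u v w : F}
    (h : algebraMap F K u + algebraMap F K v * e + algebraMap F K w * e ^ 2 = 0) :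
    u = 0 ∧ v = 0 ∧ w = 0 := by
  have hli := linearIndependent_pow_of_pow_prime_eq Nat.prime_three ha he
  rw [Fintype.linearIndependent_iff] at hli
  have huvw := hli ![u, v, w] (by simpa [Fin.sum_univ_three, Algebra.smul_def] using h)
  exact ⟨huvw 0, huvw 1, huvw 2⟩

theorem exists_eq_add_mul_add_mul_sq (hK : Module.finrank F K = 3) (ha : ∀ q : F, q ^ 3 ≠ a)
    (he : e ^ 3 = algebraMap F K a) (x : K) :
    ∃ u v w : F, x = algebraMap F K u + algebraMap F K v * e + algebraMap F K w * e ^ 2 := by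
  have hli := linearIndependent_pow_of_pow_prime_eq Nat.prime_three ha he
  let B := basisOfLinearIndependentOfCardEqFinrank hli (by rw [Fintype.card_fin, hK])
  refine ⟨B.repr x 0, B.repr x 1, B.repr x 2, (B.sum_repr x).symm.trans ?_⟩
  simp [B, Fin.sum_univ_three, Algebra.smul_def]

end RadicalExtension

section MordellCurve

open WeierstrassCurve.Affine

/-- The Mordell curve `y² = x³ + k`, as an affine Weierstrass curve. -/
def mordellCurve {R : Type*} [CommRing R] (k : R) : WeierstrassCurve.Affine R := ⟨0, 0, 0, 0, k⟩

variable {F : Type*} [Field F] {k x y : F}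

theorem mordellCurve_equation_iff : (mordellCurve k).Equation x y ↔ y ^ 2 = x ^ 3 + k := by
  simp [equation_iff, mordellCurve]

theorem mordellCurve_ne_negY (h2 : (2 : F) ≠ 0) (hy : y ≠ 0) : y ≠ (mordellCurve k).negY x y := by
  simpa [negY, mordellCurve, eq_neg_iff_add_eq_zero, ← two_mul] using And.intro h2 hy

theorem mordellCurve_nonsingular (h2 : (2 : F) ≠ 0) (hy : y ≠ 0) (h : y ^ 2 = x ^ 3 + k) :
    (mordellCurve k).Nonsingular x y :=
  (nonsingular_iff _ _).mpr
    ⟨mordellCurve_equation_iff.mpr h, Or.inr (mordellCurve_ne_negY h2 hy)⟩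

theorem exists_sq_eq_cube_add_mul_pow_six {R : Type*} [CommRing R] [IsDomain R]
    [IsIntegrallyClosed R] [Algebra R F] [IsFractionRing R F] {r s k : R} (hs : s ≠ 0) {y : F}
    (h : (mordellCurve (algebraMap R F k)).Equation
      (algebraMap R F r / algebraMap R F s ^ 2) y) :
    ∃ t : R, t ^ 2 = r ^ 3 + k * s ^ 6 := by
  have hs' : algebraMap R F s ≠ 0 := by simpa using hs
  have hy : (y * algebraMap R F s ^ 3) ^ 2 = algebraMap R F (r ^ 3 + k * s ^ 6) := by
    rw [mul_pow, mordellCurve_equation_iff.mp h]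
    simp only [map_add, map_mul, map_pow]
    field_simp
  obtain ⟨t, ht⟩ := IsIntegrallyClosed.exists_algebraMap_eq_of_isIntegral_pow two_pos
    (hy ▸ isIntegral_algebraMap : IsIntegral R ((y * algebraMap R F s ^ 3) ^ 2))
  refine ⟨t, IsFractionRing.injective R F ?_⟩
  rw [map_pow, ht, hy]

variable [DecidableEq F]

theorem mordellCurve_addX_self (h2 : (2 : F) ≠ 0) (hy : y ≠ 0) :
    (mordellCurve k).addX x x ((mordellCurve k).slope x x y y) =
      (3 * x ^ 2 / (2 * y)) ^ 2 - 2 * x := by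
  rw [slope_of_Y_ne rfl (mordellCurve_ne_negY h2 hy)]
  simp only [negY, addX, mordellCurve]
  ring

theorem exists_eq_two_nsmul_of_addX_self_eq {W : WeierstrassCurve.Affine F} {x₀ y₀ : F}
    (h : W.Nonsingular x y) (h₀ : W.Nonsingular x₀ y₀) (hy₀ : y₀ ≠ W.negY x₀ y₀)
    (hx : x = W.addX x₀ x₀ (W.slope x₀ x₀ y₀ y₀)) :
    ∃ Q : W.Point, Point.some _ _ h = 2 • Q := by
  have hdbl := Point.add_self_of_Y_ne (h₁ := h₀) hy₀
  have h2Q := nonsingular_add h₀ h₀ fun hxy ↦ hy₀ hxy.right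
  rcases Y_eq_of_X_eq h.1 h2Q.1 hx with hy | hy
  · exact ⟨.some _ _ h₀, by rw [two_nsmul, hdbl, Point.some.injEq]; exact ⟨hx, hy⟩⟩
  · refine ⟨-.some _ _ h₀, ?_⟩
    rw [two_nsmul, ← neg_add, hdbl, Point.neg_some, Point.some.injEq]
    exact ⟨hx, hy⟩

-- The three equations express `(u + v e + w e²)² = x - e` for a cube root `e` of `-k`; then `x` is
-- the abscissa of `2 • (v / w, 1 / w)`.
theorem mordellCurve_exists_eq_two_nsmul (h2 : (2 : F) ≠ 0)
    (h : (mordellCurve k).Nonsingular x y) {u v w : F} (h_one : u ^ 2 - 2 * v * w * k = x)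
    (h_e : 2 * u * v - k * w ^ 2 = -1) (h_sq : v ^ 2 + 2 * u * w = 0) :
    ∃ Q : (mordellCurve k).Point, Point.some _ _ h = 2 • Q := by
  have hw : w ≠ 0 := by
    rintro rfl
    obtain rfl : v = 0 := by simpa using h_sq
    simp at h_e
  have hQ : (1 / w) ^ 2 = (v / w) ^ 3 + k := by
    field_simp
    linear_combination w * h_e - v * h_sq
  have hy : 1 / w ≠ 0 := one_div_ne_zero hw
  refine exists_eq_two_nsmul_of_addX_self_eq h (mordellCurve_nonsingular h2 hy hQ)
    (mordellCurve_ne_negY h2 hy) ?_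
  rw [mordellCurve_addX_self h2 hy, ← h_one]
  field_simp
  field_simp at hQ
  linear_combination 8 * v * hQ + (2 * u * w - v ^ 2) * h_sq

theorem mordellCurve_exists_eq_two_nsmul_of_sq_eq_sub {K : Type*} [Field K] [Algebra F K]
    (h2 : (2 : F) ≠ 0) (hK : Module.finrank F K = 3) (hk : ∀ q : F, q ^ 3 ≠ -k) {e : K}
    (he : e ^ 3 = algebraMap F K (-k)) (h : (mordellCurve k).Nonsingular x y) {β : K}
    (hβ : β ^ 2 = algebraMap F K x - e) :
    ∃ Q : (mordellCurve k).Point, Point.some _ _ h = 2 • Q := by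
  obtain ⟨u, v, w, rfl⟩ := exists_eq_add_mul_add_mul_sq hK hk he β
  obtain ⟨h_one, h_e, h_sq⟩ := eq_zero_of_add_mul_add_mul_sq_eq_zero hk he
    (u := u ^ 2 - 2 * v * w * k - x) (v := 2 * u * v - k * w ^ 2 + 1) (w := v ^ 2 + 2 * u * w) (by
      simp only [map_neg, map_add, map_sub, map_mul, map_pow, map_one, map_ofNat] at he ⊢
      linear_combination hβ - (2 * algebraMap F K v * algebraMap F K w +
        algebraMap F K w ^ 2 * e) * he)
  exact mordellCurve_exists_eq_two_nsmul h2 h (sub_eq_zero.mp h_one)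
    (eq_neg_of_add_eq_zero_left h_e) h_sq

theorem sq_ne_sub_sq_mul_of_forall_ne_two_nsmul {K : Type*} [Field K] [Algebra F K]
    (h2 : (2 : F) ≠ 0) (hK : Module.finrank F K = 3) (hk : ∀ q : F, q ^ 3 ≠ -k) {e : K}
    (he : e ^ 3 = algebraMap F K (-k)) {r s : F} (hs : s ≠ 0)
    (h : (mordellCurve k).Nonsingular (r / s ^ 2) y)
    (hP : ∀ Q : (mordellCurve k).Point, Point.some _ _ h ≠ 2 • Q) (β : K) :
    β ^ 2 ≠ algebraMap F K r - algebraMap F K s ^ 2 * e := by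
  intro hβ
  have hsK : algebraMap F K s ≠ 0 := (map_ne_zero _).mpr hs
  have hβs : (β / algebraMap F K s) ^ 2 = algebraMap F K (r / s ^ 2) - e := by
    rw [div_pow, hβ, map_div₀, map_pow]
    field_simp
  obtain ⟨Q, hQ⟩ := mordellCurve_exists_eq_two_nsmul_of_sq_eq_sub h2 hK hk he h hβs
  exact hP Q hQ

end MordellCurve

/-- `a : K` is, up to multiplication by squares of `K`, an element of `A` outside `𝔭`. When `A` is
a Dedekind domain with fraction field `K` and `𝔭 ≠ 0` is prime, this is evenness of the `𝔭`-adic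
valuation of `a ≠ 0`, phrased so that no valuation is needed. -/
def IsUnitModSquaresAt {A K : Type*} [CommRing A] [Field K] [Algebra A K] (𝔭 : Ideal A) (a : K) :
    Prop :=
  ∃ z : K, ∃ δ : A, δ ∉ 𝔭 ∧ z ^ 2 * a = algebraMap A K δ

section Unramified

open Polynomial

theorem adjoin_algebraMap_mul_add_algebraMap_eq_top {K L : Type*} [Field K] [CommRing L]
    [Algebra K L] {θ : L} (hθ : Algebra.adjoin K {θ} = ⊤) {u : K} (hu : u ≠ 0) (v : K) :
    Algebra.adjoin K {algebraMap K L u * θ + algebraMap K L v} = ⊤ := by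
  set ξ := algebraMap K L u * θ + algebraMap K L v with hξ
  have hθξ : θ = algebraMap K L u⁻¹ * (ξ - algebraMap K L v) := by
    rw [hξ, add_sub_cancel_right, ← mul_assoc, ← map_mul, inv_mul_cancel₀ hu, map_one, one_mul]
  rw [eq_top_iff, ← hθ]
  refine Algebra.adjoin_singleton_le ?_
  rw [hθξ]
  exact mul_mem (algebraMap_mem _ _)
    (sub_mem (Algebra.self_mem_adjoin_singleton K ξ) (algebraMap_mem _ _))

variable {A K L B : Type*} [CommRing A] [IsDedekindDomain A] [Field K] [Algebra A K]
  [IsFractionRing A K] [Field L] [Algebra K L] [FiniteDimensional K L] [Algebra.IsSeparable K L]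
  [Algebra A L] [IsScalarTower A K L] [CommRing B] [IsDomain B] [Algebra A B]
  [Algebra B L] [IsScalarTower A B L] [IsIntegralClosure B A L]

theorem isUnramifiedAt_of_aeval_derivative_minpoly_notMem {x : B}
    (hx : Algebra.adjoin K {algebraMap B L x} = ⊤) {𝔮 : Ideal B} [𝔮.IsPrime]
    (hx' : aeval x (derivative (minpoly A x)) ∉ 𝔮) : Algebra.IsUnramifiedAt A 𝔮 := by
  have : IsDedekindDomain B := IsIntegralClosure.isDedekindDomain A K L B
  have : IsFractionRing B L := IsIntegralClosure.isFractionRing_of_finite_extension A K L B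
  have : Module.Finite A B := IsIntegralClosure.finite A K L B
  have : Module.IsTorsionFree A L := .trans_faithfulSMul A K L
  have : Module.IsTorsionFree A B := IsIntegralClosure.isTorsionFree A L
  let := FractionRing.liftAlgebra A (FractionRing B)
  have : Algebra.IsSeparable (FractionRing A) (FractionRing B) := by
    refine Algebra.IsSeparable.of_equiv_equiv (FractionRing.algEquiv A K).symm.toRingEquiv
      (FractionRing.algEquiv B L).symm.toRingEquiv
      (IsLocalization.ringHom_ext (nonZeroDivisors A) ?_)
    ext a
    simp [← IsScalarTower.algebraMap_apply A K L, IsScalarTower.algebraMap_apply A B L,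
      ← IsScalarTower.algebraMap_apply A (FractionRing A) (FractionRing B),
      ← IsScalarTower.algebraMap_apply A B (FractionRing B)]
  exact not_dvd_differentIdeal_iff.mp fun h ↦
    hx' (Ideal.dvd_iff_le.mp h (aeval_derivative_mem_differentIdeal A K L x hx))

theorem isUnramifiedAt_of_aeval_derivative_notMem {x : B}
    (hx : Algebra.adjoin K {algebraMap B L x} = ⊤) {f : A[X]} (hf : aeval x f = 0)
    {𝔮 : Ideal B} [𝔮.IsPrime] (hf' : aeval x (derivative f) ∉ 𝔮) :
    Algebra.IsUnramifiedAt A 𝔮 := by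
  refine isUnramifiedAt_of_aeval_derivative_minpoly_notMem hx fun hx' ↦ hf' ?_
  have hxA : IsIntegral A x := (IsIntegralClosure.isIntegral_algebra A L).isIntegral x
  have : Module.IsTorsionFree A L := .trans_faithfulSMul A K L
  have : Module.IsTorsionFree A B := IsIntegralClosure.isTorsionFree A L
  obtain ⟨g, rfl⟩ := minpoly.isIntegrallyClosed_dvd hxA hf
  simpa using 𝔮.mul_mem_right (aeval x g) hx'

theorem isUnramifiedAt_of_discrim_notMem {ξ : L} (hξ : Algebra.adjoin K {ξ} = ⊤) {a b : A}
    (hab : ξ ^ 2 + algebraMap A L a * ξ + algebraMap A L b = 0) {𝔮 : Ideal B} [𝔮.IsPrime]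
    (hdisc : a ^ 2 - 4 * b ∉ 𝔮.under A) : Algebra.IsUnramifiedAt A 𝔮 := by
  set f : A[X] := X ^ 2 + C a * X + C b with hf
  have hξA : IsIntegral A ξ := ⟨f, by rw [hf]; monicity!, by simpa [hf] using hab⟩
  obtain ⟨x, rfl⟩ := (IsIntegralClosure.isIntegral_iff (A := B)).mp hξA
  have hx : aeval x f = 0 := by
    apply IsIntegralClosure.algebraMap_injective B A L
    simpa [hf, ← IsScalarTower.algebraMap_apply] using hab
  have hx' : aeval x f.derivative = 2 * x + algebraMap A B a := by
    simp [hf, one_add_one_eq_two, map_ofNat (algebraMap A B)]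
  have hsq : algebraMap A B (a ^ 2 - 4 * b) = (2 * x + algebraMap A B a) ^ 2 := by
    simp only [hf, map_add, map_mul, map_pow, aeval_X, aeval_C] at hx
    simp only [map_sub, map_mul, map_pow, map_ofNat]
    linear_combination -4 * hx
  refine isUnramifiedAt_of_aeval_derivative_notMem hξ hx fun h ↦ hdisc ?_
  rw [Ideal.under_def, Ideal.mem_comap, hsq, ← hx']
  exact 𝔮.pow_mem_of_mem h 2 two_pos

theorem isUnramifiedAt_of_isUnitModSquaresAt {θ : L} (hθ : Algebra.adjoin K {θ} = ⊤) {a : K}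
    (hθa : θ ^ 2 = algebraMap K L a) {𝔮 : Ideal B} [𝔮.IsPrime]
    (ha : IsUnitModSquaresAt (𝔮.under A) a) (h2 : (2 : A) ∉ 𝔮.under A) :
    Algebra.IsUnramifiedAt A 𝔮 := by
  obtain ⟨z, δ, hδ, hz⟩ := ha
  have hz0 : z ≠ 0 := by
    rintro rfl
    obtain rfl : δ = 0 := by simpa using hz.symm
    exact hδ (zero_mem _)
  have hzθ : Algebra.adjoin K {algebraMap K L z * θ} = ⊤ := by
    simpa using adjoin_algebraMap_mul_add_algebraMap_eq_top hθ hz0 0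
  have hzθ_sq : (algebraMap K L z * θ) ^ 2 = algebraMap A L δ := by
    rw [mul_pow, hθa, ← map_pow, ← map_mul, hz, ← IsScalarTower.algebraMap_apply]
  refine isUnramifiedAt_of_discrim_notMem hzθ (a := 0) (b := -δ) (by simp [hzθ_sq]) fun h ↦ ?_
  have h4 : 2 * 2 * δ ∈ 𝔮.under A := by convert h using 1; ring
  have := Ideal.IsPrime.under A 𝔮
  simp [Ideal.IsPrime.mul_mem_iff_mem_or_mem, h2, hδ] at h4

theorem isUnramifiedAt_of_sq_eq_one_add_four_mul (h2 : (2 : K) ≠ 0) {θ : L}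
    (hθ : Algebra.adjoin K {θ} = ⊤) {κ : A} (hθκ : θ ^ 2 = algebraMap A L (1 + 4 * κ))
    {𝔮 : Ideal B} [𝔮.IsPrime] (hκ : 1 + 4 * κ ∉ 𝔮.under A) : Algebra.IsUnramifiedAt A 𝔮 := by
  have h2L : algebraMap K L 2 ≠ 0 := (_root_.map_ne_zero _).mpr h2
  rw [map_ofNat] at h2L
  refine isUnramifiedAt_of_discrim_notMem (a := -1) (b := -κ)
    (adjoin_algebraMap_mul_add_algebraMap_eq_top hθ (inv_ne_zero h2) 2⁻¹) ?_ (by simpa using hκ)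
  simp only [map_add, map_mul, map_neg, map_one, map_inv₀, map_ofNat] at hθκ ⊢
  field_simp
  linear_combination hθκ

theorem isUnramifiedAt_of_sq_eq_one_add_four_mul_of_isUnitModSquaresAt (h2 : (2 : K) ≠ 0) {θ : L}
    (hθ : Algebra.adjoin K {θ} = ⊤) {κ : A} (hθκ : θ ^ 2 = algebraMap A L (1 + 4 * κ))
    {𝔮 : Ideal B} [𝔮.IsPrime]
    (hκ : IsUnitModSquaresAt (𝔮.under A) (algebraMap A K (1 + 4 * κ))) :
    Algebra.IsUnramifiedAt A 𝔮 := by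
  by_cases h2𝔮 : (2 : A) ∈ 𝔮.under A
  · refine isUnramifiedAt_of_sq_eq_one_add_four_mul h2 hθ hθκ fun h ↦ ?_
    have h1 : (1 : A) ∈ 𝔮.under A := by
      convert sub_mem h (Ideal.mul_mem_right (2 * κ) _ h2𝔮) using 1
      ring
    exact (Ideal.IsPrime.under A 𝔮).one_notMem h1
  · exact isUnramifiedAt_of_isUnitModSquaresAt hθ
      (by rw [hθκ, ← IsScalarTower.algebraMap_apply]) hκ h2𝔮

end Unramified

section Integers

theorem sq_dvd_of_sq_dvd_cube_sub_mul_cube {R : Type*} [CommRing R] {p m r c : R} (hr : p ∣ r)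
    (hc : IsCoprime p c) (h : p ^ 2 ∣ r ^ 3 - m * c ^ 3) : p ^ 2 ∣ m := by
  have hr3 : p ^ 2 ∣ r ^ 3 := (pow_dvd_pow_of_dvd hr 2).trans (pow_dvd_pow r (by norm_num))
  exact hc.pow.dvd_of_dvd_mul_right ((dvd_sub_right hr3).mp h)

theorem not_dvd_of_isCoprime_of_sq_eq_cube_sub_mul_cube {R : Type*} [CommRing R]
    {p m r c t : R} (hp : Prime p) (hrc : IsCoprime r c) (ht : t ^ 2 = r ^ 3 - m * c ^ 3)
    (hpt : p ∣ t) : ¬ p ∣ c := by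
  intro hpc
  have hr : r ^ 3 = t ^ 2 + m * c ^ 3 := by rw [ht, sub_add_cancel]
  have hpr : p ∣ r ^ 3 := hr ▸ dvd_add (hpt.trans (dvd_pow_self t two_ne_zero))
    ((hpc.trans (dvd_pow_self c three_ne_zero)).mul_left m)
  exact hp.not_isUnit (hrc.isUnit_of_dvd' (hp.dvd_of_dvd_pow hpr) hpc)

theorem exists_pow_eq_intCast_of_dvd_pow_sub_mul_pow {n d : ℕ} {m r c : ℤ} (hc : IsCoprime c n)
    (h : (n : ℤ) ∣ r ^ d - m * c ^ d) : ∃ x : ZMod n, x ^ d = m := by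
  obtain ⟨u, v, huv⟩ := hc
  have hu : (u * c : ZMod n) = 1 := by simpa using congrArg (Int.cast : ℤ → ZMod n) huv
  have hr : (r : ZMod n) ^ d = m * c ^ d := by
    rw [← sub_eq_zero]
    exact_mod_cast (ZMod.intCast_zmod_eq_zero_iff_dvd _ n).mpr h
  exact ⟨u * r, by rw [mul_pow, hr, mul_left_comm, ← mul_pow, hu, one_pow, mul_one]⟩

theorem zmod_nine_pow_three_ne {a : ZMod 9} (ha : a ≠ 0 ∧ a ≠ 1 ∧ a ≠ -1) (x : ZMod 9) :
    x ^ 3 ≠ a := by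
  decide +revert

variable {m r c t p : ℤ}

theorem rat_pow_three_ne_intCast (hm9 : ∀ x : ZMod 9, x ^ 3 ≠ m) (q : ℚ) : q ^ 3 ≠ m := by
  intro hq
  have hint : IsIntegral ℤ (q ^ 3) := hq ▸ isIntegral_algebraMap (R := ℤ) (A := ℚ) (x := m)
  obtain ⟨k, rfl⟩ := IsIntegrallyClosed.exists_algebraMap_eq_of_isIntegral_pow three_pos hint
  rw [eq_intCast] at hq
  have hk : k ^ 3 = m := by exact_mod_cast hq
  exact hm9 k (by rw [← hk, Int.cast_pow])

theorem not_dvd_three_of_sq_eq_cube_sub_mul_cube (hm9 : ∀ x : ZMod 9, x ^ 3 ≠ m) (hp : Prime p)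
    (hpc : ¬ p ∣ c) (ht : t ^ 2 = r ^ 3 - m * c ^ 3) (hpt : p ∣ t) : ¬ p ∣ 3 := by
  intro hp3
  have hassoc : Associated p 3 := hp.associated_of_dvd Int.prime_three hp3
  have h9 : ((9 : ℕ) : ℤ) ∣ r ^ 3 - m * c ^ 3 := by
    simpa [← ht] using pow_dvd_pow_of_dvd (hassoc.dvd_iff_dvd_left.mp hpt) 2
  have hc3 : IsCoprime c 3 :=
    ((Int.prime_three.coprime_iff_not_dvd).mpr (mt hassoc.dvd_iff_dvd_left.mpr hpc)).symm
  have hc9 : IsCoprime c (9 : ℕ) := by simpa using hc3.pow_right (n := 2)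
  obtain ⟨x, hx⟩ := exists_pow_eq_intCast_of_dvd_pow_sub_mul_pow hc9 h9
  exact hm9 x hx

theorem exists_eq_sq_mul_not_dvd (hcf : ∀ d : ℤ, d ^ 3 ∣ m → IsUnit d) (hp : Prime p)
    (hpr : p ∣ r) (hpc : ¬ p ∣ c) (ht : t ^ 2 = r ^ 3 - m * c ^ 3) (hpt : p ∣ t) :
    ∃ n, m = p ^ 2 * n ∧ ¬ p ∣ n := by
  obtain ⟨n, rfl⟩ := sq_dvd_of_sq_dvd_cube_sub_mul_cube hpr (hp.coprime_iff_not_dvd.mpr hpc)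
    (ht ▸ pow_dvd_pow_of_dvd hpt 2)
  exact ⟨n, rfl, fun hpn ↦ hp.not_isUnit (hcf p (pow_succ p 2 ▸ mul_dvd_mul_left (p ^ 2) hpn))⟩

theorem modEq_one_of_odd_of_sq_modEq_cube (hr : Odd r) (h : t ^ 2 ≡ r ^ 3 [ZMOD 8]) :
    r ≡ 1 [ZMOD 8] := by
  have sq_modEq_one {n : ℤ} (hn : Odd n) : n ^ 2 ≡ 1 [ZMOD 8] :=
    (Int.modEq_iff_dvd.mpr (Int.eight_dvd_sq_sub_one_of_odd hn)).symm
  have ht : Odd t := by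
    have h2 : t ^ 2 ≡ r ^ 3 [ZMOD 2] := h.of_mul_right 4
    have hodd : Odd (t ^ 2) := Int.odd_iff.mpr (h2.eq.trans (Int.odd_iff.mp hr.pow))
    exact (Int.odd_pow' two_ne_zero).mp hodd
  calc r = r * 1 := (mul_one r).symm
    _ ≡ r * r ^ 2 [ZMOD 8] := (sq_modEq_one hr).symm.mul_left r
    _ = r ^ 3 := by ring
    _ ≡ t ^ 2 [ZMOD 8] := h.symm
    _ ≡ 1 [ZMOD 8] := sq_modEq_one ht

end Integers

section SquareClass

variable {A K : Type*} [CommRing A] [Field K] [Algebra A K] [IsFractionRing A K] {𝔭 : Ideal A}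

theorem isUnitModSquaresAt_of_mul_eq_sq {a a' t : A} (ha : a ≠ 0) (ha' : a' ∉ 𝔭)
    (h : a * a' = t ^ 2) : IsUnitModSquaresAt 𝔭 (algebraMap A K a) := by
  have haK : algebraMap A K a ≠ 0 := by simpa using ha
  refine ⟨algebraMap A K t / algebraMap A K a, a', ha', ?_⟩
  rw [div_pow, ← map_pow, ← h, map_mul]
  field_simp

theorem dvd_sq_of_pow_three_eq_sq_mul [IsDomain A] [IsIntegrallyClosed A] {p n ω : A}
    (hω : ω ^ 3 = p ^ 2 * n) : p ∣ ω ^ 2 := by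
  rw [← IsIntegrallyClosed.pow_dvd_pow_iff three_ne_zero]
  exact ⟨p * n ^ 2, by linear_combination (ω ^ 3 + p ^ 2 * n) * hω⟩

theorem isUnitModSquaresAt_sub_mul_of_pow_three_eq_sq_mul [IsDomain A] [IsIntegrallyClosed A]
    [𝔭.IsPrime] {p n ω r c : A} (hp : p ≠ 0) (hp𝔭 : p ∈ 𝔭) (hn : n ∉ 𝔭) (hc : c ∉ 𝔭)
    (hpr : p ∣ r) (hω : ω ^ 3 = p ^ 2 * n) :
    IsUnitModSquaresAt 𝔭 (algebraMap A K (r - c * ω)) := by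
  obtain ⟨q, rfl⟩ := hpr
  obtain ⟨η, hη⟩ := dvd_sq_of_pow_three_eq_sq_mul hω
  have hη𝔭 : η ∈ 𝔭 := by
    have hη3 : η ^ 3 = p * n ^ 2 := by
      apply mul_left_cancel₀ (pow_ne_zero 3 hp)
      linear_combination ((p * η) ^ 2 + p * η * ω ^ 2 + ω ^ 4) * -hη + (ω ^ 3 + p ^ 2 * n) * hω
    exact Ideal.IsPrime.mem_of_pow_mem ‹_› 3 (hη3 ▸ 𝔭.mul_mem_right _ hp𝔭)
  have hpK : algebraMap A K p ≠ 0 := by simpa using hp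
  refine ⟨algebraMap A K ω / algebraMap A K p, q * η - n * c, fun h ↦ ?_, ?_⟩
  · have hnc := (Submodule.sub_mem_iff_right 𝔭 (𝔭.mul_mem_left q hη𝔭)).mp h
    simp [Ideal.IsPrime.mul_mem_iff_mem_or_mem, hn, hc] at hnc
  · have hηK := congrArg (algebraMap A K) hη
    have hωK := congrArg (algebraMap A K) hω
    simp only [map_sub, map_mul, map_pow] at hηK hωK ⊢
    field_simp
    linear_combination algebraMap A K p * algebraMap A K q * hηK - algebraMap A K c * hωK

theorem isUnitModSquaresAt_sub_mul_of_sq_eq [IsDomain A] [IsIntegrallyClosed A] [CharZero A]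
    [Algebra.IsIntegral ℤ A] {m r c t : ℤ} (hcf : ∀ d : ℤ, d ^ 3 ∣ m → IsUnit d)
    (hm9 : ∀ x : ZMod 9, x ^ 3 ≠ m) (hrc : IsCoprime r c) (ht : t ^ 2 = r ^ 3 - m * c ^ 3)
    {ω : A} (hω : ω ^ 3 = m) (hα : (r - c * ω : A) ≠ 0) (𝔭 : Ideal A) [𝔭.IsPrime] :
    IsUnitModSquaresAt 𝔭 (algebraMap A K (r - c * ω)) := by
  have hmul : (r - c * ω) * (r ^ 2 + r * c * ω + c ^ 2 * ω ^ 2 : A) = t ^ 2 := by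
    have htA := congrArg (Int.cast : ℤ → A) ht
    push_cast at htA
    linear_combination -htA - c ^ 3 * hω
  by_cases hα' : (r ^ 2 + r * c * ω + c ^ 2 * ω ^ 2 : A) ∈ 𝔭
  swap
  · exact isUnitModSquaresAt_of_mul_eq_sq hα hα' hmul
  by_cases hα𝔭 : (r - c * ω : A) ∈ 𝔭
  swap
  · exact ⟨1, _, hα𝔭, by rw [one_pow, one_mul]⟩
  have : NeZero 𝔭 := ⟨fun h ↦ hα (by simpa [h] using hα𝔭)⟩
  let p : ℤ := (Ideal.absNorm (𝔭.under ℤ) : ℕ)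
  have hp : Prime p := Nat.prime_iff_prime_int.mp (Nat.absNorm_under_prime 𝔭)
  have mem_iff (d : ℤ) : (d : A) ∈ 𝔭 ↔ p ∣ d := Int.cast_mem_ideal_iff
  have hpt : p ∣ t := (mem_iff t).mp
    (Ideal.IsPrime.mem_of_pow_mem ‹_› 2 (hmul ▸ 𝔭.mul_mem_right _ hα𝔭))
  have hpc := not_dvd_of_isCoprime_of_sq_eq_cube_sub_mul_cube hp hrc ht hpt
  have hpr : p ∣ r := by
    have h3r : p ∣ 3 * r ^ 2 := by
      rw [← mem_iff]
      convert add_mem hα' (𝔭.mul_mem_left (2 * r + c * ω) hα𝔭) using 1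
      push_cast
      ring
    have hp3 := not_dvd_three_of_sq_eq_cube_sub_mul_cube hm9 hp hpc ht hpt
    exact hp.dvd_of_dvd_pow ((hp.dvd_or_dvd h3r).resolve_left hp3)
  obtain ⟨n, rfl, hpn⟩ := exists_eq_sq_mul_not_dvd hcf hp hpr hpc ht hpt
  exact isUnitModSquaresAt_sub_mul_of_pow_three_eq_sq_mul (Int.cast_ne_zero.mpr hp.ne_zero)
    ((mem_iff p).mpr dvd_rfl) (mt (mem_iff n).mp hpn) (mt (mem_iff c).mp hpc)
    (map_dvd (Int.castRingHom A) hpr) (by exact_mod_cast hω)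

end SquareClass

section Twist

variable {m b r s : ℤ}

theorem exists_sq_eq_cube_sub_mul_cube {y : ℚ} (hs : s ≠ 0)
    (h : (Wmb m b).Equation ((r : ℚ) / (s : ℚ) ^ 2) y) :
    ∃ t : ℤ, t ^ 2 = r ^ 3 - m * (s ^ 2 * b) ^ 3 := by
  have hW : Wmb m b = mordellCurve (algebraMap ℤ ℚ (-(m * b ^ 3))) := by simp [Wmb, mordellCurve]
  obtain ⟨t, ht⟩ := exists_sq_eq_cube_add_mul_pow_six (k := -(m * b ^ 3)) hs (hW ▸ h)
  exact ⟨t, by rw [ht]; ring⟩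

theorem sq_ne_sub_mul_of_forall_ne_two_nsmul {K : Type*} [Field K] [CharZero K]
    (hm9 : ∀ x : ZMod 9, x ^ 3 ≠ m) (hK : Module.finrank ℚ K = 3) {ω : K} (hω : ω ^ 3 = m)
    (hb : b ≠ 0) (hs : s ≠ 0) {y : ℚ} (h : (Wmb m b).Nonsingular ((r : ℚ) / (s : ℚ) ^ 2) y)
    (hP : ∀ Q : (Wmb m b).Point, WeierstrassCurve.Affine.Point.some _ _ h ≠ 2 • Q) (β : K) :
    β ^ 2 ≠ r - s ^ 2 * b * ω := by
  have hk (q : ℚ) : q ^ 3 ≠ - -((m : ℚ) * (b : ℚ) ^ 3) := by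
    intro hq
    have hbℚ : (b : ℚ) ≠ 0 := Int.cast_ne_zero.mpr hb
    refine rat_pow_three_ne_intCast hm9 (q / b) ?_
    rw [div_pow, hq]
    field_simp
  have he : (b * ω) ^ 3 = algebraMap ℚ K (- -((m : ℚ) * (b : ℚ) ^ 3)) := by
    rw [mul_pow, hω, neg_neg, mul_comm]
    simp
  simpa [mul_assoc] using sq_ne_sub_sq_mul_of_forall_ne_two_nsmul two_ne_zero hK hk he
    (Int.cast_ne_zero.mpr hs) h hP β

theorem modEq_one_of_sq_eq_cube_sub_mul_cube {t : ℤ} (hrs : IsCoprime r s) (hs : 2 ∣ s)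
    (ht : t ^ 2 = r ^ 3 - m * (s ^ 2 * b) ^ 3) : r ≡ 1 [ZMOD 8] := by
  have hr : Odd r := by
    rw [← Int.isCoprime_two_right]
    exact hrs.of_isCoprime_of_dvd_right hs
  refine modEq_one_of_odd_of_sq_modEq_cube (t := t) hr ?_
  obtain ⟨σ, rfl⟩ := hs
  exact Int.modEq_iff_dvd.mpr ⟨8 * m * b ^ 3 * σ ^ 6, by rw [ht]; ring⟩

theorem exists_sub_mul_eq_one_add_four_mul {A : Type*} [CommRing A] (hr : r ≡ 1 [ZMOD 4])
    (hs : 2 ∣ s) (ω : A) : ∃ κ : A, (r - s ^ 2 * b * ω : A) = 1 + 4 * κ := by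
  obtain ⟨ρ, hρ⟩ := hr.symm.dvd
  obtain ⟨σ, rfl⟩ := hs
  obtain rfl : r = 1 + 4 * ρ := by rw [← hρ]; ring
  refine ⟨ρ - σ ^ 2 * b * ω, ?_⟩
  push_cast
  ring

end Twist

theorem quadratic_extension_unramified_everywhere_general
    (m : ℤ) (hcf : ∀ d : ℤ, d ^ 3 ∣ m → IsUnit d)
    (h9 : (m : ZMod 9) ≠ 0 ∧ (m : ZMod 9) ≠ 1 ∧ (m : ZMod 9) ≠ -1)
    (K : Type*) [Field K] [NumberField K] (hK : Module.finrank ℚ K = 3)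
    (ω : 𝓞 K) (hω : ω ^ 3 = (m : 𝓞 K))
    (b : ℤ) (hb : b ≠ 0)
    (r s : ℤ) (hs : s ≠ 0) (y : ℚ)
    (hns : (Wmb m b).Nonsingular ((r : ℚ) / (s : ℚ) ^ 2) y)
    (hP : ∀ Q : (Wmb m b).Point, WeierstrassCurve.Affine.Point.some _ _ hns ≠ 2 • Q)
    (hrs : IsCoprime r s) (hrb : IsCoprime r b) (hseven : 2 ∣ s)
    (α : 𝓞 K) (hα : α = (r : 𝓞 K) - (s : 𝓞 K) ^ 2 * (b : 𝓞 K) * ω)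
    (L : Type*) [Field L] [NumberField L] [Algebra K L]
    (θ : L) (hθ : θ ^ 2 = algebraMap K L (α : K))
    (hgen : Algebra.adjoin K {θ} = ⊤) :
    r ≡ 1 [ZMOD 8] ∧
    Module.finrank K L = 2 ∧
    ∀ (𝔭 : Ideal (𝓞 K)) (𝔮 : Ideal (𝓞 L)), 𝔭.IsPrime → 𝔭 ≠ ⊥ → 𝔮.IsPrime →
      Ideal.comap (algebraMap (𝓞 K) (𝓞 L)) 𝔮 = 𝔭 →
      Ideal.ramificationIdx' 𝔭 𝔮 = 1 := by
  have hm9 := zmod_nine_pow_three_ne h9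
  obtain ⟨t, ht⟩ := exists_sq_eq_cube_sub_mul_cube hs hns.left
  have hr : r ≡ 1 [ZMOD 8] := modEq_one_of_sq_eq_cube_sub_mul_cube hrs hseven ht
  obtain ⟨κ, hκ⟩ := exists_sub_mul_eq_one_add_four_mul (b := b) (hr.of_mul_right 2) hseven ω
  have hnsq : ∀ β : K, β ^ 2 ≠ α := by
    have hωK : (ω : K) ^ 3 = m := by simpa using congrArg (algebraMap (𝓞 K) K) hω
    simpa [hα] using sq_ne_sub_mul_of_forall_ne_two_nsmul hm9 hK hωK hb hs hns hP
  have hα0 : α ≠ 0 := by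
    rintro rfl
    exact hnsq 0 (by simp)
  refine ⟨hr, finrank_eq_of_pow_prime_eq Nat.prime_two hnsq hθ hgen, ?_⟩
  rintro _ 𝔮 h𝔭 h𝔭0 h𝔮 rfl
  have hα𝔭 : IsUnitModSquaresAt (𝔮.under (𝓞 K)) (α : K) := by
    have hrc : IsCoprime r (s ^ 2 * b) := hrs.pow_right.mul_right hrb
    simpa [hα] using isUnitModSquaresAt_sub_mul_of_sq_eq (K := K) hcf hm9 hrc ht hω
      (by simpa [hα] using hα0) (𝔮.under (𝓞 K))
  have hθκ : θ ^ 2 = algebraMap (𝓞 K) L (1 + 4 * κ) := by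
    rw [hθ, hα, hκ, ← IsScalarTower.algebraMap_apply]
  have : Algebra.IsUnramifiedAt (𝓞 K) 𝔮 :=
    isUnramifiedAt_of_sq_eq_one_add_four_mul_of_isUnitModSquaresAt two_ne_zero hgen hθκ
      (hκ ▸ hα ▸ hα𝔭)
  rw [Ideal.ramificationIdx'_eq_ramificationIdx _ 𝔮 h𝔭0]
  exact Ideal.ramificationIdx_eq_one 𝔮 (𝓞 K)

/-- In the situation of Statement 15, if moreover `s` is even and
`r > 0`, then `r ≡ 1 (mod 4)` and every nonzero prime of `O_K` (including those above
2) is unramified in the quadratic extension `K(√α)` of `K`. -/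
theorem quadratic_extension_unramified_everywhere
    (m : ℤ) (hm : ¬ ∃ k : ℤ, k ^ 3 = m) (hcf : ∀ d : ℤ, d ^ 3 ∣ m → IsUnit d)
    (h9 : (m : ZMod 9) ≠ 0 ∧ (m : ZMod 9) ≠ 1 ∧ (m : ZMod 9) ≠ -1)
    (K : Type*) [Field K] [NumberField K] (hK : Module.finrank ℚ K = 3)
    (ω : 𝓞 K) (hω : ω ^ 3 = (m : 𝓞 K))
    (b : ℤ) (hb : b ≠ 0)
    (P : (Wmb m b).Point) (hP : ∀ Q : (Wmb m b).Point, P ≠ 2 • Q)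
    (r s : ℤ) (hs : s ≠ 0) (y : ℚ)
    (hns : (Wmb m b).Nonsingular ((r : ℚ) / (s : ℚ) ^ 2) y)
    (hPeq : P = WeierstrassCurve.Affine.Point.some _ _ hns)
    (hrs : IsCoprime r s) (hrb : IsCoprime r b)
    (hseven : 2 ∣ s) (hrpos : 0 < r)
    (α : 𝓞 K) (hα : α = (r : 𝓞 K) - (s : 𝓞 K) ^ 2 * (b : 𝓞 K) * ω)
    (L : Type*) [Field L] [NumberField L] [Algebra K L]
    (θ : L) (hθ : θ ^ 2 = algebraMap K L (α : K))
    (hgen : Algebra.adjoin K {θ} = ⊤) :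
    r ≡ 1 [ZMOD 4] ∧
    Module.finrank K L = 2 ∧
    ∀ (𝔭 : Ideal (𝓞 K)) (𝔮 : Ideal (𝓞 L)), 𝔭.IsPrime → 𝔭 ≠ ⊥ → 𝔮.IsPrime →
      Ideal.comap (algebraMap (𝓞 K) (𝓞 L)) 𝔮 = 𝔭 →
      Ideal.ramificationIdx' 𝔭 𝔮 = 1 := by
  obtain ⟨hr, hunr⟩ := quadratic_extension_unramified_everywhere_general m hcf h9 K hK ω hω b hb r s
    hs y hns (hPeq ▸ hP) hrs hrb hseven α hα L θ hθ hgen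
  exact ⟨hr.of_mul_right 2, hunr⟩
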